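/- Let (C, ψ_C) be a Coder pair and (M, ρ_l, ρ_r, ψ_M) a bicomodule of (C, ψ_C). Then the maps d_c^n of the Coder-pair cochain complex satisfy d_c^{n+1} ∘ d_c^n = 0 for all n ≥ 1; i.e. for every f ∈ C_c^n(M,C) and g ∈ C_c^{n−1}(M,C), one has δ_c(δ_c(f)) = 0 and δ_c(δ_c(g) + (−1)^n ω(f)) + (−1)^{n+1} ω(δ_c(f)) = 0. -/

import Mathlib

open TensorProduct LinearMap

variable (k : Type) [Field k]

/-- Iterated tensor power: `Tpow k C n = C^{⊗(n+1)}`, right-nested. -/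
noncomputable def Tpow (C : ModuleCat.{0} k) : ℕ → ModuleCat.{0} k
  | 0 => C
  | n + 1 => ModuleCat.of k (C ⊗[k] Tpow C n)

/-- `Id^{⊗ i} ⊗ Δ ⊗ Id^{⊗ (n - i)} : C^{⊗(n+1)} → C^{⊗(n+2)}`, applying `Δ` to the
`i`-th tensor factor (0-based). -/
noncomputable def insDelta (C : ModuleCat.{0} k) (Δ : C →ₗ[k] C ⊗[k] C) :
    (n : ℕ) → Fin (n + 1) → (Tpow k C n →ₗ[k] Tpow k C (n + 1))
  | 0, _ => Δ
  | n + 1, i =>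
    i.cases
      ((TensorProduct.assoc k C C (Tpow k C n)).toLinearMap ∘ₗ
        LinearMap.rTensor (Tpow k C n) Δ)
      (fun j => LinearMap.lTensor C (insDelta C Δ n j))

/-- `Id^{⊗ i} ⊗ ψ ⊗ Id^{⊗ (n - i)} : C^{⊗(n+1)} → C^{⊗(n+1)}`, applying `ψ` to the
`i`-th tensor factor (0-based). -/
noncomputable def psiAt (C : ModuleCat.{0} k) (ψ : C →ₗ[k] C) :
    (n : ℕ) → Fin (n + 1) → (Tpow k C n →ₗ[k] Tpow k C n)
  | 0, _ => ψ
  | n + 1, i =>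
    i.cases (LinearMap.rTensor (Tpow k C n) ψ)
      (fun j => LinearMap.lTensor C (psiAt C ψ n j))

/-- The canonical identification `C^{⊗(n+1)} ⊗ C ≅ C^{⊗(n+2)}`. -/
noncomputable def rshift (C : ModuleCat.{0} k) :
    (n : ℕ) → ((Tpow k C n) ⊗[k] C →ₗ[k] Tpow k C (n + 1))
  | 0 => LinearMap.id
  | n + 1 => LinearMap.lTensor C (rshift C n) ∘ₗ
      (TensorProduct.assoc k C (Tpow k C n) C).toLinearMap

variable {k}

/-- The Hochschild coalgebra coboundary
`δ_c(f) = (Id_C ⊗ f) ∘ ρ_l + Σ_{i=1}^{n} (−1)^i (Id^{⊗(i−1)} ⊗ Δ ⊗ Id^{⊗(n−i)}) ∘ f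
          + (−1)^{n+1} (f ⊗ Id_C) ∘ ρ_r`
for `f ∈ C_c^{n+1}(M, C) = Hom(M, C^{⊗(n+1)})`. -/
noncomputable def deltaC (C : ModuleCat.{0} k) (Δ : C →ₗ[k] C ⊗[k] C)
    (M : ModuleCat.{0} k) (ρl : M →ₗ[k] C ⊗[k] M) (ρr : M →ₗ[k] M ⊗[k] C)
    (n : ℕ) (f : M →ₗ[k] Tpow k C n) : M →ₗ[k] Tpow k C (n + 1) :=
  (show (M : Type) →ₗ[k] Tpow k C (n + 1) from LinearMap.lTensor C f ∘ₗ ρl)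
    + ∑ j : Fin (n + 1), ((-1 : ℤ) ^ (j.val + 1)) • (insDelta k C Δ n j ∘ₗ f)
    + ((-1 : ℤ) ^ (n + 2)) • (rshift k C n ∘ₗ LinearMap.rTensor C f ∘ₗ ρr)

/-- The operator `ω(f) = Σ_{i=1}^{n} (Id^{⊗(i−1)} ⊗ ψ_C ⊗ Id^{⊗(n−i)}) ∘ f − f ∘ ψ_M`
for `f ∈ C_c^{n+1}(M, C) = Hom(M, C^{⊗(n+1)})`. -/
noncomputable def omegaC (C : ModuleCat.{0} k) (ψC : C →ₗ[k] C)
    (M : ModuleCat.{0} k) (ψM : M →ₗ[k] M)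
    (n : ℕ) (f : M →ₗ[k] Tpow k C n) : M →ₗ[k] Tpow k C n :=
  (∑ j : Fin (n + 1), psiAt k C ψC n j ∘ₗ f) - f ∘ₗ ψM

/-!
The Hochschild coboundary is a sum `δ = L + D + R` of a left coaction term, the cobar differential
acting on values, and a signed right coaction term. The identity `δ² = 0` splits into
`L² + L D + D L = 0` (the left coaction is coassociative), `L R + R L = 0` (the coactions commute),
`D² = 0` (`Δ` is coassociative) and `D R + R D + R² = 0`: comultiplying the last tensor factor is
the one summand of `D R` that `R D` does not cancel, and right coassociativity identifies it with
`-R²`. The signs are absorbed into `D` and `R`, so that the identities for `C^{⊗(n+1)} = C ⊗ C^{⊗n}`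
follow from those for `C^{⊗n}` without reference to `n`.

The operator `ω` measures the failure of a cochain to intertwine `ψ_M` with the extension of `ψ_C`
to the tensor power by the Leibniz rule. The structure maps `Δ`, `ρ_l`, `ρ_r` intertwine such
extensions, hence `δ ω = ω δ`, and the mixed terms of `d²` cancel by sign.
-/

namespace CoderPair

theorem sum_comp {R M N P ι : Type*} [CommSemiring R] [AddCommMonoid M] [AddCommMonoid N]
    [AddCommMonoid P] [Module R M] [Module R N] [Module R P] (s : Finset ι)
    (g : ι → N →ₗ[R] P) (f : M →ₗ[R] N) :
    (∑ i ∈ s, g i) ∘ₗ f = ∑ i ∈ s, g i ∘ₗ f :=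
  map_sum (lcomp R P f) g s

section TensorProduct

variable {R : Type*} [CommSemiring R] {A B E A' B' E' : Type*}
  [AddCommMonoid A] [AddCommMonoid B] [AddCommMonoid E]
  [AddCommMonoid A'] [AddCommMonoid B'] [AddCommMonoid E']
  [Module R A] [Module R B] [Module R E] [Module R A'] [Module R B'] [Module R E']

theorem assoc_rTensor_rTensor (g : A →ₗ[R] A') (t : (A ⊗[R] B) ⊗[R] E) :
    TensorProduct.assoc R A' B E (rTensor E (rTensor B g) t)
      = rTensor (B ⊗[R] E) g (TensorProduct.assoc R A B E t) := by
  rw [rTensor_tensor]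
  simp

theorem assoc_rTensor_lTensor (g : B →ₗ[R] B') (t : (A ⊗[R] B) ⊗[R] E) :
    TensorProduct.assoc R A B' E (rTensor E (lTensor A g) t)
      = lTensor A (rTensor E g) (TensorProduct.assoc R A B E t) :=
  (LinearMap.congr_fun (lTensor_rTensor_comp_assoc B g) t).symm

theorem assoc_lTensor (g : E →ₗ[R] E') (t : (A ⊗[R] B) ⊗[R] E) :
    TensorProduct.assoc R A B E' (lTensor (A ⊗[R] B) g t)
      = lTensor A (lTensor B g) (TensorProduct.assoc R A B E t) := by
  rw [lTensor_tensor]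
  simp

theorem lTensor_rTensor_comm (f : A →ₗ[R] A') (g : B →ₗ[R] B') (t : A ⊗[R] B) :
    lTensor A' g (rTensor B f t) = rTensor B' f (lTensor A g t) :=
  LinearMap.congr_fun ((lTensor_comp_rTensor ..).trans (rTensor_comp_lTensor ..).symm) t

theorem assoc_assoc (t : ((A ⊗[R] B) ⊗[R] E) ⊗[R] E') :
    TensorProduct.assoc R A B (E ⊗[R] E') (TensorProduct.assoc R (A ⊗[R] B) E E' t)
      = lTensor A (TensorProduct.assoc R B E E').toLinearMap
          (TensorProduct.assoc R A (B ⊗[R] E) E'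
            (rTensor E' (TensorProduct.assoc R A B E).toLinearMap t)) := by
  rw [assoc_tensor]
  exact LinearEquiv.apply_symm_apply _ _

theorem assoc_rTensor_assoc_assoc_symm (t : (A ⊗[R] B) ⊗[R] (E ⊗[R] E')) :
    TensorProduct.assoc R A (B ⊗[R] E) E' (rTensor E' (TensorProduct.assoc R A B E).toLinearMap
        ((TensorProduct.assoc R (A ⊗[R] B) E E').symm t))
      = lTensor A (TensorProduct.assoc R B E E').symm.toLinearMap
          (TensorProduct.assoc R A B (E ⊗[R] E') t) := by
  obtain ⟨s, rfl⟩ := (TensorProduct.assoc R (A ⊗[R] B) E E').surjective t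
  rw [LinearEquiv.symm_apply_apply, assoc_assoc, ← lTensor_comp_apply, LinearEquiv.symm_comp,
    lTensor_id, LinearMap.id_apply]

end TensorProduct

section KroneckerSum

variable {R : Type*} [CommSemiring R] {A B E A' B' : Type*}
  [AddCommMonoid A] [AddCommMonoid B] [AddCommMonoid E] [AddCommMonoid A'] [AddCommMonoid B']
  [Module R A] [Module R B] [Module R E] [Module R A'] [Module R B']

/-- The Kronecker sum `φ ⊗ 1 + 1 ⊗ χ` of two endomorphisms: the extension of `φ` and `χ` to the
tensor product by the Leibniz rule. -/
noncomputable def kroneckerSum (φ : A →ₗ[R] A) (χ : B →ₗ[R] B) : A ⊗[R] B →ₗ[R] A ⊗[R] B :=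
  rTensor B φ + lTensor A χ

theorem rTensor_comp_kroneckerSum {g : A →ₗ[R] A'} {φ : A →ₗ[R] A} {φ' : A' →ₗ[R] A'}
    (h : g ∘ₗ φ = φ' ∘ₗ g) (χ : B →ₗ[R] B) :
    rTensor B g ∘ₗ kroneckerSum φ χ = kroneckerSum φ' χ ∘ₗ rTensor B g := by
  simp only [kroneckerSum, comp_add, add_comp, ← rTensor_comp, h, rTensor_comp_lTensor,
    lTensor_comp_rTensor]

theorem lTensor_comp_kroneckerSum {g : B →ₗ[R] B'} {χ : B →ₗ[R] B} {χ' : B' →ₗ[R] B'}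
    (φ : A →ₗ[R] A) (h : g ∘ₗ χ = χ' ∘ₗ g) :
    lTensor A g ∘ₗ kroneckerSum φ χ = kroneckerSum φ χ' ∘ₗ lTensor A g := by
  simp only [kroneckerSum, comp_add, add_comp, ← lTensor_comp, h, rTensor_comp_lTensor,
    lTensor_comp_rTensor]

theorem assoc_comp_kroneckerSum (φ : A →ₗ[R] A) (χ : B →ₗ[R] B) (ξ : E →ₗ[R] E) :
    (TensorProduct.assoc R A B E).toLinearMap ∘ₗ kroneckerSum (kroneckerSum φ χ) ξ
      = kroneckerSum φ (kroneckerSum χ ξ) ∘ₗ (TensorProduct.assoc R A B E).toLinearMap := by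
  ext t
  simp [kroneckerSum, add_assoc]

theorem sum_cons_rTensor_lTensor {n : ℕ} (φ : A →ₗ[R] A) (χ : Fin n → (B →ₗ[R] B)) :
    ∑ j : Fin (n + 1), (Fin.cons (rTensor B φ) (fun i ↦ lTensor A (χ i)) :
        Fin (n + 1) → (A ⊗[R] B →ₗ[R] A ⊗[R] B)) j
      = kroneckerSum φ (∑ j : Fin n, χ j) := by
  rw [Fin.sum_univ_succ, kroneckerSum, ← coe_lTensorHom, map_sum]
  rfl

end KroneckerSum

section ComulHead

variable {R : Type*} [CommSemiring R] {C : Type*} [AddCommMonoid C] [Module R C]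
  {Δ : C →ₗ[R] C ⊗[R] C} {X Y : Type*} [AddCommMonoid X] [AddCommMonoid Y] [Module R X] [Module R Y]

variable (Δ X) in
/-- Comultiplication of the leading tensor factor, with the result nested to the right. -/
noncomputable def comulHead : C ⊗[R] X →ₗ[R] C ⊗[R] (C ⊗[R] X) :=
  (TensorProduct.assoc R C C X).toLinearMap ∘ₗ rTensor X Δ

theorem comulHead_apply (t : C ⊗[R] X) :
    comulHead Δ X t = TensorProduct.assoc R C C X (rTensor X Δ t) :=
  rfl

theorem comulHead_lTensor (g : X →ₗ[R] Y) (t : C ⊗[R] X) :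
    comulHead Δ Y (lTensor C g t) = lTensor C (lTensor C g) (comulHead Δ X t) := by
  rw [comulHead_apply, comulHead_apply, ← lTensor_rTensor_comm, assoc_lTensor]

theorem comulHead_assoc (t : (C ⊗[R] X) ⊗[R] Y) :
    comulHead Δ (X ⊗[R] Y) (TensorProduct.assoc R C X Y t)
      = lTensor C (TensorProduct.assoc R C X Y).toLinearMap
          (TensorProduct.assoc R C (C ⊗[R] X) Y (rTensor Y (comulHead Δ X) t)) := by
  rw [comulHead_apply, ← assoc_rTensor_rTensor, assoc_assoc, comulHead, rTensor_comp_apply]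

theorem comulHead_comulHead (hΔ : comulHead Δ C ∘ₗ Δ = lTensor C Δ ∘ₗ Δ) (t : C ⊗[R] X) :
    comulHead Δ (C ⊗[R] X) (comulHead Δ X t)
      = lTensor C (comulHead Δ X) (comulHead Δ X t) := by
  rw [comulHead_apply t, comulHead_assoc, ← rTensor_comp_apply, hΔ, rTensor_comp_apply,
    assoc_rTensor_lTensor, ← lTensor_comp_apply, comulHead]

theorem comulHead_comp_kroneckerSum {ψ : C →ₗ[R] C} (hψ : Δ ∘ₗ ψ = kroneckerSum ψ ψ ∘ₗ Δ)
    (χ : X →ₗ[R] X) :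
    comulHead Δ X ∘ₗ kroneckerSum ψ χ = kroneckerSum ψ (kroneckerSum ψ χ) ∘ₗ comulHead Δ X := by
  rw [comulHead, comp_assoc, rTensor_comp_kroneckerSum hψ, ← comp_assoc, assoc_comp_kroneckerSum,
    comp_assoc]

end ComulHead

section Steps

variable {R : Type*} [CommRing R] {C X : Type*}
  [AddCommGroup C] [AddCommGroup X] [Module R C] [Module R X] {Δ : C →ₗ[R] C ⊗[R] C}

variable (Δ) in
/-- The passage from the cobar differential `D` on `X = C^{⊗n}` to the one on
`C ⊗ X = C^{⊗(n+1)}`. -/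
noncomputable def cobarStep (D : X →ₗ[R] C ⊗[R] X) : C ⊗[R] X →ₗ[R] C ⊗[R] (C ⊗[R] X) :=
  -(comulHead Δ X + lTensor C D)

theorem cobarStep_apply (D : X →ₗ[R] C ⊗[R] X) (t : C ⊗[R] X) :
    cobarStep Δ D t = -(comulHead Δ X t + lTensor C D t) :=
  rfl

/-- The passage from a signed shift `X ⊗ C → C ⊗ X` on `X = C^{⊗n}` to the one on
`C ⊗ X = C^{⊗(n+1)}`. -/
noncomputable def shiftStep (r : X ⊗[R] C →ₗ[R] C ⊗[R] X) :
    (C ⊗[R] X) ⊗[R] C →ₗ[R] C ⊗[R] (C ⊗[R] X) :=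
  -(lTensor C r ∘ₗ (TensorProduct.assoc R C X C).toLinearMap)

theorem shiftStep_apply (r : X ⊗[R] C →ₗ[R] C ⊗[R] X) (t : (C ⊗[R] X) ⊗[R] C) :
    shiftStep r t = -lTensor C r (TensorProduct.assoc R C X C t) :=
  rfl

theorem shiftStep_zsmul (z : ℤ) (r : X ⊗[R] C →ₗ[R] C ⊗[R] X) :
    shiftStep (z • r) = z • shiftStep r := by
  rw [shiftStep, ← coe_lTensorHom, map_zsmul, smul_comp, shiftStep, smul_neg, coe_lTensorHom]

variable (Δ) in
/-- Comultiplication of the last tensor factor of `X ⊗ C`, followed by shifting both resulting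
factors into place with `r`. For `X = C^{⊗n}` this is, up to sign, the summand of the cobar
differential on `C^{⊗(n+1)}` that does not arise from the one on `X`. -/
noncomputable def comulTail (r : X ⊗[R] C →ₗ[R] C ⊗[R] X) : X ⊗[R] C →ₗ[R] C ⊗[R] (C ⊗[R] X) :=
  shiftStep r ∘ₗ rTensor C r ∘ₗ (TensorProduct.assoc R X C C).symm.toLinearMap ∘ₗ lTensor X Δ

theorem sum_cons_comulHead_lTensor {n : ℕ} (d : Fin n → (X →ₗ[R] C ⊗[R] X)) :
    ∑ j : Fin (n + 1), (-1 : ℤ) ^ (j.val + 1) •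
        (Fin.cons (comulHead Δ X) (fun i ↦ lTensor C (d i)) :
          Fin (n + 1) → (C ⊗[R] X →ₗ[R] C ⊗[R] (C ⊗[R] X))) j
      = cobarStep Δ (∑ j : Fin n, (-1 : ℤ) ^ (j.val + 1) • d j) := by
  have hd : lTensor C (∑ j : Fin n, (-1 : ℤ) ^ (j.val + 1) • d j)
      = ∑ j : Fin n, (-1 : ℤ) ^ (j.val + 1) • lTensor C (d j) := by
    simp only [← coe_lTensorHom, map_sum, map_zsmul]
  rw [Fin.sum_univ_succ, cobarStep, hd, neg_add, ← Finset.sum_neg_distrib]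
  simp [pow_succ]

theorem cobarStep_neg_comp_neg (hΔ : comulHead Δ C ∘ₗ Δ = lTensor C Δ ∘ₗ Δ) :
    cobarStep Δ (-Δ) ∘ₗ (-Δ) = 0 := by
  rw [cobarStep, lTensor_neg, neg_comp, comp_neg, neg_neg, add_comp, neg_comp, hΔ, add_neg_cancel]

theorem cobarStep_cobarStep_comp (hΔ : comulHead Δ C ∘ₗ Δ = lTensor C Δ ∘ₗ Δ)
    {D : X →ₗ[R] C ⊗[R] X} (hD : cobarStep Δ D ∘ₗ D = 0) :
    cobarStep Δ (cobarStep Δ D) ∘ₗ cobarStep Δ D = 0 := by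
  refine LinearMap.ext fun t ↦ ?_
  have hDD : lTensor C (cobarStep Δ D) (lTensor C D t) = 0 := by
    rw [← lTensor_comp_apply, hD, lTensor_zero, LinearMap.zero_apply]
  have hcomul : lTensor C (cobarStep Δ D) (comulHead Δ X t)
      = -(comulHead Δ (C ⊗[R] X) (comulHead Δ X t)
        + comulHead Δ (C ⊗[R] X) (lTensor C D t)) := by
    rw [cobarStep, lTensor_neg, lTensor_add, LinearMap.neg_apply, LinearMap.add_apply,
      comulHead_comulHead hΔ, comulHead_lTensor]
  rw [comp_apply, cobarStep_apply D, map_neg, cobarStep_apply, neg_neg, map_add, map_add, hDD,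
    add_zero, hcomul, add_neg_cancel, LinearMap.zero_apply]

theorem comulTail_shiftStep (r : X ⊗[R] C →ₗ[R] C ⊗[R] X) (t : (C ⊗[R] X) ⊗[R] C) :
    comulTail Δ (shiftStep r) t = lTensor C (comulTail Δ r) (TensorProduct.assoc R C X C t) := by
  simp only [comulTail, comp_apply, lTensor_comp, LinearEquiv.coe_coe, ← assoc_lTensor,
    ← assoc_rTensor_assoc_assoc_symm]
  simp [shiftStep, rTensor_comp, assoc_rTensor_lTensor, rTensor_neg]

theorem shiftStep_shiftStep_comulHead (r : X ⊗[R] C →ₗ[R] C ⊗[R] X) (t : (C ⊗[R] X) ⊗[R] C) :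
    shiftStep (shiftStep r) (rTensor C (comulHead Δ X) t)
      = -comulHead Δ (C ⊗[R] X) (shiftStep r t) := by
  rw [shiftStep_apply r, map_neg, neg_neg, comulHead_lTensor, comulHead_assoc]
  simp [shiftStep, lTensor_neg, lTensor_comp]

theorem shiftStep_shiftStep_lTensor (D : X →ₗ[R] C ⊗[R] X) (r : X ⊗[R] C →ₗ[R] C ⊗[R] X)
    (t : (C ⊗[R] X) ⊗[R] C) :
    shiftStep (shiftStep r) (rTensor C (lTensor C D) t)
      = -lTensor C (shiftStep r ∘ₗ rTensor C D) (TensorProduct.assoc R C X C t) := by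
  rw [shiftStep_apply, assoc_rTensor_lTensor, lTensor_comp_apply]

theorem cobarStep_neg_comp_id_add :
    cobarStep Δ (-Δ) ∘ₗ LinearMap.id + shiftStep LinearMap.id ∘ₗ rTensor C (-Δ)
      + comulTail Δ LinearMap.id = 0 := by
  refine LinearMap.ext fun t ↦ ?_
  simp [cobarStep, shiftStep, comulTail, comulHead, rTensor_neg, lTensor_neg]

theorem cobarStep_comp_shiftStep_add {D : X →ₗ[R] C ⊗[R] X} {r : X ⊗[R] C →ₗ[R] C ⊗[R] X}
    (h : cobarStep Δ D ∘ₗ r + shiftStep r ∘ₗ rTensor C D + comulTail Δ r = 0) :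
    cobarStep Δ (cobarStep Δ D) ∘ₗ shiftStep r
      + shiftStep (shiftStep r) ∘ₗ rTensor C (cobarStep Δ D) + comulTail Δ (shiftStep r) = 0 := by
  refine LinearMap.ext fun t ↦ ?_
  set u := TensorProduct.assoc R C X C t
  have hD : cobarStep Δ (cobarStep Δ D) (shiftStep r t)
      = -comulHead Δ (C ⊗[R] X) (shiftStep r t) + lTensor C (cobarStep Δ D ∘ₗ r) u := by
    rw [cobarStep_apply, neg_add, shiftStep_apply, map_neg (lTensor C _), neg_neg,
      lTensor_comp_apply]
  have hr : shiftStep (shiftStep r) (rTensor C (cobarStep Δ D) t)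
      = comulHead Δ (C ⊗[R] X) (shiftStep r t) + lTensor C (shiftStep r ∘ₗ rTensor C D) u := by
    rw [cobarStep, rTensor_neg, rTensor_add, LinearMap.neg_apply, LinearMap.add_apply, map_neg,
      map_add, shiftStep_shiftStep_comulHead, shiftStep_shiftStep_lTensor, ← neg_add, neg_neg]
  calc
    _ = lTensor C (cobarStep Δ D ∘ₗ r + shiftStep r ∘ₗ rTensor C D + comulTail Δ r) u := by
      simp only [LinearMap.add_apply, comp_apply, hD, hr, comulTail_shiftStep, lTensor_add]
      abel
    _ = 0 := by rw [h, lTensor_zero, LinearMap.zero_apply]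

theorem cobarStep_comp_kroneckerSum {ψ : C →ₗ[R] C} {P : X →ₗ[R] X} {D : X →ₗ[R] C ⊗[R] X}
    (hψ : Δ ∘ₗ ψ = kroneckerSum ψ ψ ∘ₗ Δ) (h : D ∘ₗ P = kroneckerSum ψ P ∘ₗ D) :
    cobarStep Δ D ∘ₗ kroneckerSum ψ P = kroneckerSum ψ (kroneckerSum ψ P) ∘ₗ cobarStep Δ D := by
  rw [cobarStep, neg_comp, comp_neg, add_comp, comp_add, comulHead_comp_kroneckerSum hψ,
    lTensor_comp_kroneckerSum ψ h]

theorem shiftStep_comp_kroneckerSum {ψ : C →ₗ[R] C} {P : X →ₗ[R] X} {r : X ⊗[R] C →ₗ[R] C ⊗[R] X}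
    (h : r ∘ₗ kroneckerSum P ψ = kroneckerSum ψ P ∘ₗ r) :
    shiftStep r ∘ₗ kroneckerSum (kroneckerSum ψ P) ψ
      = kroneckerSum ψ (kroneckerSum ψ P) ∘ₗ shiftStep r := by
  rw [shiftStep, neg_comp, comp_neg, comp_assoc, assoc_comp_kroneckerSum, ← comp_assoc,
    lTensor_comp_kroneckerSum ψ h, comp_assoc]

end Steps

section Bicomodule

variable {R : Type*} [CommSemiring R] {C M X Y : Type*}
  [AddCommMonoid C] [AddCommMonoid M] [AddCommMonoid X] [AddCommMonoid Y]
  [Module R C] [Module R M] [Module R X] [Module R Y]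
  {Δ : C →ₗ[R] C ⊗[R] C} {ρl : M →ₗ[R] C ⊗[R] M} {ρr : M →ₗ[R] M ⊗[R] C}

variable (Δ ρl ρr) in
/-- `(M, ρl, ρr)` is a bicomodule over the non-counital coalgebra `(C, Δ)`. -/
structure IsBicomodule : Prop where
  left_coassoc : comulHead Δ M ∘ₗ ρl = lTensor C ρl ∘ₗ ρl
  right_coassoc :
    (TensorProduct.assoc R M C C).toLinearMap ∘ₗ rTensor C ρr ∘ₗ ρr = lTensor M Δ ∘ₗ ρr
  coact_comm :
    lTensor C ρr ∘ₗ ρl = (TensorProduct.assoc R C M C).toLinearMap ∘ₗ rTensor C ρl ∘ₗ ρr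

variable (X ρl) in
/-- The term `f ↦ (1 ⊗ f) ∘ ρl` of the Hochschild coboundary. -/
noncomputable def leftTerm : (M →ₗ[R] X) →ₗ[R] (M →ₗ[R] C ⊗[R] X) :=
  lcomp R (C ⊗[R] X) ρl ∘ₗ lTensorHom C

variable (ρr) in
/-- The term `f ↦ r ∘ (f ⊗ 1) ∘ ρr` of the Hochschild coboundary, where `r` moves the last tensor
factor into place and carries the sign. -/
noncomputable def rightTerm (r : X ⊗[R] C →ₗ[R] Y) : (M →ₗ[R] X) →ₗ[R] (M →ₗ[R] Y) :=
  compRight R r ∘ₗ lcomp R (X ⊗[R] C) ρr ∘ₗ rTensorHom C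

theorem leftTerm_apply (f : M →ₗ[R] X) : leftTerm X ρl f = lTensor C f ∘ₗ ρl :=
  rfl

theorem rightTerm_apply (r : X ⊗[R] C →ₗ[R] Y) (f : M →ₗ[R] X) :
    rightTerm ρr r f = r ∘ₗ rTensor C f ∘ₗ ρr :=
  rfl

end Bicomodule

section Coboundary

variable {R : Type*} [CommRing R] {C M X Y : Type*}
  [AddCommGroup C] [AddCommGroup M] [AddCommGroup X] [AddCommGroup Y]
  [Module R C] [Module R M] [Module R X] [Module R Y]
  {Δ : C →ₗ[R] C ⊗[R] C} {ρl : M →ₗ[R] C ⊗[R] M} {ρr : M →ₗ[R] M ⊗[R] C}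

variable (ρl ρr) in
/-- The Hochschild coboundary on cochains with values in `X = C^{⊗n}`, assembled from the cobar
differential `D` and the signed shift `r` on `X`. -/
noncomputable def coboundary (D : X →ₗ[R] C ⊗[R] X) (r : X ⊗[R] C →ₗ[R] C ⊗[R] X) :
    (M →ₗ[R] X) →ₗ[R] (M →ₗ[R] C ⊗[R] X) :=
  leftTerm X ρl + compRight R D + rightTerm ρr r

theorem coboundary_apply (D : X →ₗ[R] C ⊗[R] X) (r : X ⊗[R] C →ₗ[R] C ⊗[R] X) (f : M →ₗ[R] X) :
    coboundary ρl ρr D r f = leftTerm X ρl f + D ∘ₗ f + rightTerm ρr r f :=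
  rfl

theorem leftTerm_leftTerm_add (hl : comulHead Δ M ∘ₗ ρl = lTensor C ρl ∘ₗ ρl)
    (D : X →ₗ[R] C ⊗[R] X) (f : M →ₗ[R] X) :
    leftTerm _ ρl (leftTerm X ρl f) + leftTerm _ ρl (D ∘ₗ f)
      + cobarStep Δ D ∘ₗ leftTerm X ρl f = 0 := by
  refine LinearMap.ext fun m ↦ ?_
  have hlm : comulHead Δ M (ρl m) = lTensor C ρl (ρl m) := LinearMap.congr_fun hl m
  simp [leftTerm_apply, cobarStep_apply, lTensor_comp, ← hlm, comulHead_lTensor]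

theorem leftTerm_rightTerm_add
    (hlr : lTensor C ρr ∘ₗ ρl = (TensorProduct.assoc R C M C).toLinearMap ∘ₗ rTensor C ρl ∘ₗ ρr)
    (r : X ⊗[R] C →ₗ[R] C ⊗[R] X) (f : M →ₗ[R] X) :
    leftTerm _ ρl (rightTerm ρr r f) + rightTerm ρr (shiftStep r) (leftTerm X ρl f) = 0 := by
  refine LinearMap.ext fun m ↦ ?_
  have hm : lTensor C ρr (ρl m) = TensorProduct.assoc R C M C (rTensor C ρl (ρr m)) :=
    LinearMap.congr_fun hlr m
  simp [leftTerm_apply, rightTerm_apply, shiftStep_apply, lTensor_comp, rTensor_comp, hm,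
    assoc_rTensor_lTensor]

theorem rightTerm_rightTerm (hr : (TensorProduct.assoc R M C C).toLinearMap ∘ₗ rTensor C ρr ∘ₗ ρr
      = lTensor M Δ ∘ₗ ρr) (r : X ⊗[R] C →ₗ[R] C ⊗[R] X) (f : M →ₗ[R] X) :
    rightTerm ρr (shiftStep r) (rightTerm ρr r f) = rightTerm ρr (comulTail Δ r) f := by
  refine LinearMap.ext fun m ↦ ?_
  have hm : TensorProduct.assoc R M C C (rTensor C ρr (ρr m)) = lTensor M Δ (ρr m) :=
    LinearMap.congr_fun hr m
  simp [rightTerm_apply, comulTail, rTensor_comp, lTensor_rTensor_comm, ← hm,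
    ← assoc_rTensor_rTensor]

theorem cobarStep_comp_rightTerm_add
    (hr : (TensorProduct.assoc R M C C).toLinearMap ∘ₗ rTensor C ρr ∘ₗ ρr = lTensor M Δ ∘ₗ ρr)
    {D : X →ₗ[R] C ⊗[R] X} {r : X ⊗[R] C →ₗ[R] C ⊗[R] X}
    (h : cobarStep Δ D ∘ₗ r + shiftStep r ∘ₗ rTensor C D + comulTail Δ r = 0) (f : M →ₗ[R] X) :
    cobarStep Δ D ∘ₗ rightTerm ρr r f + rightTerm ρr (shiftStep r) (D ∘ₗ f)
      + rightTerm ρr (shiftStep r) (rightTerm ρr r f) = 0 := by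
  rw [rightTerm_rightTerm hr]
  simp only [rightTerm_apply, rTensor_comp, ← comp_assoc, ← add_comp]
  rw [h, zero_comp, zero_comp]

theorem coboundary_coboundary (hM : IsBicomodule Δ ρl ρr)
    {D : X →ₗ[R] C ⊗[R] X} {r : X ⊗[R] C →ₗ[R] C ⊗[R] X} (hD : cobarStep Δ D ∘ₗ D = 0)
    (h : cobarStep Δ D ∘ₗ r + shiftStep r ∘ₗ rTensor C D + comulTail Δ r = 0) (f : M →ₗ[R] X) :
    coboundary ρl ρr (cobarStep Δ D) (shiftStep r) (coboundary ρl ρr D r f) = 0 := by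
  have hDf : cobarStep Δ D ∘ₗ D ∘ₗ f = 0 := by rw [← comp_assoc, hD, zero_comp]
  calc
    _ = (leftTerm _ ρl (leftTerm X ρl f) + leftTerm _ ρl (D ∘ₗ f)
          + cobarStep Δ D ∘ₗ leftTerm X ρl f)
        + (leftTerm _ ρl (rightTerm ρr r f) + rightTerm ρr (shiftStep r) (leftTerm X ρl f))
        + (cobarStep Δ D ∘ₗ rightTerm ρr r f + rightTerm ρr (shiftStep r) (D ∘ₗ f)
          + rightTerm ρr (shiftStep r) (rightTerm ρr r f))
        + cobarStep Δ D ∘ₗ D ∘ₗ f := by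
      simp only [coboundary_apply, map_add]
      abel
    _ = 0 := by
      rw [leftTerm_leftTerm_add hM.left_coassoc, leftTerm_rightTerm_add hM.coact_comm,
        cobarStep_comp_rightTerm_add hM.right_coassoc h, hDf, add_zero, add_zero, add_zero]

/-- The failure `P ∘ f - f ∘ Q` of `f` to intertwine the endomorphisms `P` and `Q`; for
coderivations this is the operator `ω`. -/
def intertwiningDefect (P : X →ₗ[R] X) (Q : M →ₗ[R] M) (f : M →ₗ[R] X) : M →ₗ[R] X :=
  P ∘ₗ f - f ∘ₗ Q

variable {ψ : C →ₗ[R] C} {P : X →ₗ[R] X} {Q : M →ₗ[R] M}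

theorem leftTerm_intertwiningDefect (hρl : ρl ∘ₗ Q = kroneckerSum ψ Q ∘ₗ ρl) (f : M →ₗ[R] X) :
    leftTerm X ρl (intertwiningDefect P Q f)
      = intertwiningDefect (kroneckerSum ψ P) Q (leftTerm X ρl f) := by
  simp only [leftTerm_apply, intertwiningDefect, comp_assoc, hρl, kroneckerSum, lTensor_sub,
    sub_comp, lTensor_comp, add_comp, comp_add]
  simp only [← comp_assoc, lTensor_comp_rTensor, rTensor_comp_lTensor]
  abel

theorem comp_intertwiningDefect {P' : Y →ₗ[R] Y} {D : X →ₗ[R] Y} (h : D ∘ₗ P = P' ∘ₗ D)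
    (f : M →ₗ[R] X) :
    D ∘ₗ intertwiningDefect P Q f = intertwiningDefect P' Q (D ∘ₗ f) := by
  rw [intertwiningDefect, comp_sub, ← comp_assoc, h, intertwiningDefect, comp_assoc, comp_assoc]

theorem rTensor_intertwiningDefect_comp (hρr : ρr ∘ₗ Q = kroneckerSum Q ψ ∘ₗ ρr) (f : M →ₗ[R] X) :
    rTensor C (intertwiningDefect P Q f) ∘ₗ ρr
      = intertwiningDefect (kroneckerSum P ψ) Q (rTensor C f ∘ₗ ρr) := by
  simp only [intertwiningDefect, comp_assoc, hρr, kroneckerSum, rTensor_sub,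
    sub_comp, rTensor_comp, add_comp, comp_add]
  simp only [← comp_assoc, lTensor_comp_rTensor, rTensor_comp_lTensor]
  abel

theorem coboundary_intertwiningDefect (hρl : ρl ∘ₗ Q = kroneckerSum ψ Q ∘ₗ ρl)
    (hρr : ρr ∘ₗ Q = kroneckerSum Q ψ ∘ₗ ρr) {D : X →ₗ[R] C ⊗[R] X} {r : X ⊗[R] C →ₗ[R] C ⊗[R] X}
    (hD : D ∘ₗ P = kroneckerSum ψ P ∘ₗ D) (hr : r ∘ₗ kroneckerSum P ψ = kroneckerSum ψ P ∘ₗ r)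
    (f : M →ₗ[R] X) :
    coboundary ρl ρr D r (intertwiningDefect P Q f)
      = intertwiningDefect (kroneckerSum ψ P) Q (coboundary ρl ρr D r f) := by
  rw [coboundary_apply, leftTerm_intertwiningDefect hρl, comp_intertwiningDefect hD,
    rightTerm_apply, rTensor_intertwiningDefect_comp hρr, comp_intertwiningDefect hr]
  simp only [coboundary_apply, rightTerm_apply, intertwiningDefect, comp_add, add_comp]
  abel

end Coboundary

section TensorPowers

variable (C : ModuleCat.{0} k) {Δ : C →ₗ[k] C ⊗[k] C} {ψ : C →ₗ[k] C}

variable (Δ) in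
/-- The cobar differential on `C^{⊗(n+1)}`: the alternating sum of the comultiplications of the
tensor factors, with sign `-1` for the first factor. Here and below, `X := Tpow k C n` is explicit
because unification does not unfold `Tpow k C (n + 1)` to `C ⊗ Tpow k C n`. -/
noncomputable def cobarDiff : (n : ℕ) → (Tpow k C n →ₗ[k] C ⊗[k] Tpow k C n)
  | 0 => -Δ
  | n + 1 => cobarStep (X := Tpow k C n) Δ (cobarDiff n)

variable (ψ) in
/-- The extension of `ψ` to `C^{⊗(n+1)}` by the Leibniz rule. -/
noncomputable def leibnizExtension : (n : ℕ) → (Tpow k C n →ₗ[k] Tpow k C n)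
  | 0 => ψ
  | n + 1 => kroneckerSum ψ (leibnizExtension n)

/-- The canonical map `C^{⊗(n+1)} ⊗ C → C ⊗ C^{⊗(n+1)}` with the sign of the last term of the
Hochschild coboundary. -/
noncomputable def signedShift : (n : ℕ) → (Tpow k C n ⊗[k] C →ₗ[k] C ⊗[k] Tpow k C n)
  | 0 => LinearMap.id
  | n + 1 => shiftStep (X := Tpow k C n) (signedShift n)

variable (Δ) in
theorem sum_insDelta (n : ℕ) :
    ∑ j : Fin (n + 1), (-1 : ℤ) ^ (j.val + 1) • insDelta k C Δ n j = cobarDiff C Δ n := by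
  induction n with
  | zero => exact (Fin.sum_univ_one _).trans (neg_one_zsmul Δ)
  | succ n ih =>
    exact (sum_cons_comulHead_lTensor (X := Tpow k C n) (insDelta k C Δ n)).trans
      (congrArg (cobarStep (X := Tpow k C n) Δ) ih)

variable (ψ) in
theorem sum_psiAt (n : ℕ) :
    ∑ j : Fin (n + 1), psiAt k C ψ n j = leibnizExtension C ψ n := by
  induction n with
  | zero => exact Fin.sum_univ_one _
  | succ n ih =>
    exact (sum_cons_rTensor_lTensor (B := Tpow k C n) ψ (psiAt k C ψ n)).trans
      (congrArg (kroneckerSum ψ) ih)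

theorem smul_rshift (n : ℕ) : (-1 : ℤ) ^ (n + 2) • rshift k C n = signedShift C n := by
  induction n with
  | zero => exact one_zsmul _
  | succ n ih =>
    rw [pow_succ, mul_smul, neg_one_zsmul]
    exact (shiftStep_zsmul (X := Tpow k C n) _ _).symm.trans
      (congrArg (shiftStep (X := Tpow k C n)) ih)

theorem cobarStep_cobarDiff_comp_cobarDiff (hΔ : comulHead Δ C ∘ₗ Δ = lTensor C Δ ∘ₗ Δ) :
    ∀ n, cobarStep (X := Tpow k C n) Δ (cobarDiff C Δ n) ∘ₗ cobarDiff C Δ n = 0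
  | 0 => cobarStep_neg_comp_neg hΔ
  | n + 1 => cobarStep_cobarStep_comp hΔ (cobarStep_cobarDiff_comp_cobarDiff hΔ n)

variable (Δ) in
theorem cobarStep_cobarDiff_comp_signedShift_add :
    ∀ n, cobarStep (X := Tpow k C n) Δ (cobarDiff C Δ n) ∘ₗ signedShift C n
      + shiftStep (X := Tpow k C n) (signedShift C n) ∘ₗ rTensor C (cobarDiff C Δ n)
      + comulTail Δ (signedShift C n) = 0
  | 0 => cobarStep_neg_comp_id_add
  | n + 1 => cobarStep_comp_shiftStep_add (cobarStep_cobarDiff_comp_signedShift_add n)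

theorem cobarDiff_comp_leibnizExtension (hψ : Δ ∘ₗ ψ = kroneckerSum ψ ψ ∘ₗ Δ) :
    ∀ n, cobarDiff C Δ n ∘ₗ leibnizExtension C ψ n
      = kroneckerSum ψ (leibnizExtension C ψ n) ∘ₗ cobarDiff C Δ n
  | 0 => (neg_comp ψ Δ).trans ((congrArg (-·) hψ).trans (comp_neg Δ (kroneckerSum ψ ψ)).symm)
  | n + 1 => cobarStep_comp_kroneckerSum hψ (cobarDiff_comp_leibnizExtension hψ n)

variable (ψ) in
theorem signedShift_comp_kroneckerSum :
    ∀ n, signedShift C n ∘ₗ kroneckerSum (leibnizExtension C ψ n) ψ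
      = kroneckerSum ψ (leibnizExtension C ψ n) ∘ₗ signedShift C n
  | 0 => rfl
  | n + 1 => shiftStep_comp_kroneckerSum (signedShift_comp_kroneckerSum n)

variable {M : ModuleCat.{0} k} {ρl : M →ₗ[k] C ⊗[k] M} {ρr : M →ₗ[k] M ⊗[k] C} {ψM : M →ₗ[k] M}

theorem deltaC_eq_coboundary (n : ℕ) (f : M →ₗ[k] Tpow k C n) :
    deltaC C Δ M ρl ρr n f
      = coboundary (X := Tpow k C n) ρl ρr (cobarDiff C Δ n) (signedShift C n) f := by
  have hD : ∑ j : Fin (n + 1), (-1 : ℤ) ^ (j.val + 1) • (insDelta k C Δ n j ∘ₗ f)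
      = cobarDiff C Δ n ∘ₗ f :=
    (sum_comp _ (fun j : Fin (n + 1) ↦ (-1 : ℤ) ^ (j.val + 1) • insDelta k C Δ n j) f).symm.trans
      (congrArg (· ∘ₗ f) (sum_insDelta C Δ n))
  have hr : (-1 : ℤ) ^ (n + 2) • (rshift k C n ∘ₗ rTensor C f ∘ₗ ρr)
      = rightTerm ρr (signedShift C n) f :=
    congrArg (· ∘ₗ rTensor C f ∘ₗ ρr) (smul_rshift C n)
  exact congrArg₂ (· + ·) (congrArg (leftTerm (Tpow k C n) ρl f + ·) hD) hr

theorem omegaC_eq_intertwiningDefect (n : ℕ) (f : M →ₗ[k] Tpow k C n) :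
    omegaC C ψ M ψM n f = intertwiningDefect (leibnizExtension C ψ n) ψM f := by
  rw [omegaC, ← sum_comp, sum_psiAt, intertwiningDefect]

theorem deltaC_deltaC (hΔ : comulHead Δ C ∘ₗ Δ = lTensor C Δ ∘ₗ Δ)
    (hM : IsBicomodule Δ ρl ρr) (n : ℕ) (f : M →ₗ[k] Tpow k C n) :
    deltaC C Δ M ρl ρr (n + 1) (deltaC C Δ M ρl ρr n f) = 0 := by
  rw [deltaC_eq_coboundary, deltaC_eq_coboundary]
  exact coboundary_coboundary hM (cobarStep_cobarDiff_comp_cobarDiff C hΔ n)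
    (cobarStep_cobarDiff_comp_signedShift_add C Δ n) f

theorem deltaC_omegaC (hψ : Δ ∘ₗ ψ = kroneckerSum ψ ψ ∘ₗ Δ)
    (hρl : ρl ∘ₗ ψM = kroneckerSum ψ ψM ∘ₗ ρl) (hρr : ρr ∘ₗ ψM = kroneckerSum ψM ψ ∘ₗ ρr)
    (n : ℕ) (f : M →ₗ[k] Tpow k C n) :
    deltaC C Δ M ρl ρr n (omegaC C ψ M ψM n f)
      = omegaC C ψ M ψM (n + 1) (deltaC C Δ M ρl ρr n f) := by
  rw [omegaC_eq_intertwiningDefect, omegaC_eq_intertwiningDefect, deltaC_eq_coboundary,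
    deltaC_eq_coboundary]
  exact coboundary_intertwiningDefect hρl hρr (cobarDiff_comp_leibnizExtension C hψ n)
    (signedShift_comp_kroneckerSum C ψ n) f

theorem deltaC_add (n : ℕ) (f g : M →ₗ[k] Tpow k C n) :
    deltaC C Δ M ρl ρr n (f + g) = deltaC C Δ M ρl ρr n f + deltaC C Δ M ρl ρr n g := by
  simp only [deltaC_eq_coboundary]
  exact map_add _ f g

theorem deltaC_zsmul (n : ℕ) (z : ℤ) (f : M →ₗ[k] Tpow k C n) :
    deltaC C Δ M ρl ρr n (z • f) = z • deltaC C Δ M ρl ρr n f := by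
  simp only [deltaC_eq_coboundary]
  exact map_zsmul _ z f

end TensorPowers

end CoderPair

theorem dC_squared_eq_zero_general
    (C : ModuleCat.{0} k) (Δ : C →ₗ[k] C ⊗[k] C)
    (hΔ : (TensorProduct.assoc k C C C).toLinearMap ∘ₗ LinearMap.rTensor C Δ ∘ₗ Δ
        = LinearMap.lTensor C Δ ∘ₗ Δ)
    (ψC : C →ₗ[k] C)
    (hψC : Δ ∘ₗ ψC = LinearMap.rTensor C ψC ∘ₗ Δ + LinearMap.lTensor C ψC ∘ₗ Δ)
    (M : ModuleCat.{0} k)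
    (ρl : M →ₗ[k] C ⊗[k] M) (ρr : M →ₗ[k] M ⊗[k] C) (ψM : M →ₗ[k] M)
    (hl : (TensorProduct.assoc k C C M).toLinearMap ∘ₗ LinearMap.rTensor M Δ ∘ₗ ρl
        = LinearMap.lTensor C ρl ∘ₗ ρl)
    (hr : (TensorProduct.assoc k M C C).toLinearMap ∘ₗ LinearMap.rTensor C ρr ∘ₗ ρr
        = LinearMap.lTensor M Δ ∘ₗ ρr)
    (hlr : LinearMap.lTensor C ρr ∘ₗ ρl
        = (TensorProduct.assoc k C M C).toLinearMap ∘ₗ LinearMap.rTensor C ρl ∘ₗ ρr)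
    (hψl : ρl ∘ₗ ψM = LinearMap.lTensor C ψM ∘ₗ ρl + LinearMap.rTensor M ψC ∘ₗ ρl)
    (hψr : ρr ∘ₗ ψM = LinearMap.rTensor C ψM ∘ₗ ρr + LinearMap.lTensor M ψC ∘ₗ ρr) :
    (∀ f : M →ₗ[k] Tpow k C 0,
      deltaC C Δ M ρl ρr 1 (deltaC C Δ M ρl ρr 0 f) = 0 ∧
      deltaC C Δ M ρl ρr 0 (((-1 : ℤ) ^ 1) • omegaC C ψC M ψM 0 f)
        + ((-1 : ℤ) ^ 2) • omegaC C ψC M ψM 1 (deltaC C Δ M ρl ρr 0 f) = 0) ∧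
    (∀ (n : ℕ) (f : M →ₗ[k] Tpow k C (n + 1)) (g : M →ₗ[k] Tpow k C n),
      deltaC C Δ M ρl ρr (n + 2) (deltaC C Δ M ρl ρr (n + 1) f) = 0 ∧
      deltaC C Δ M ρl ρr (n + 1)
          (deltaC C Δ M ρl ρr n g + ((-1 : ℤ) ^ (n + 2)) • omegaC C ψC M ψM (n + 1) f)
        + ((-1 : ℤ) ^ (n + 3)) • omegaC C ψC M ψM (n + 2) (deltaC C Δ M ρl ρr (n + 1) f)
        = 0) := by
  have hM : CoderPair.IsBicomodule Δ ρl ρr := ⟨hl, hr, hlr⟩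
  have hψ : Δ ∘ₗ ψC = CoderPair.kroneckerSum ψC ψC ∘ₗ Δ := by
    rw [hψC, CoderPair.kroneckerSum, add_comp]
  have hρl : ρl ∘ₗ ψM = CoderPair.kroneckerSum ψC ψM ∘ₗ ρl := by
    rw [hψl, CoderPair.kroneckerSum, add_comp, add_comm]
  have hρr : ρr ∘ₗ ψM = CoderPair.kroneckerSum ψM ψC ∘ₗ ρr := by
    rw [hψr, CoderPair.kroneckerSum, add_comp]
  have hδδ (n : ℕ) (f : M →ₗ[k] Tpow k C n) := CoderPair.deltaC_deltaC C hΔ hM n f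
  have hδω (n : ℕ) (f : M →ₗ[k] Tpow k C n) := CoderPair.deltaC_omegaC C hψ hρl hρr n f
  refine ⟨fun f ↦ ⟨hδδ 0 f, ?_⟩, fun n f g ↦ ⟨hδδ (n + 1) f, ?_⟩⟩
  · rw [CoderPair.deltaC_zsmul, hδω, pow_succ _ 1, mul_neg_one, neg_smul, add_neg_cancel]
  · rw [CoderPair.deltaC_add, hδδ, CoderPair.deltaC_zsmul, hδω, pow_succ _ (n + 2), mul_neg_one,
      neg_smul, zero_add, add_neg_cancel]

/-- For a Coder pair `(C, ψ_C)` and a bicomodule `(M, ρ_l, ρ_r, ψ_M)` over it, the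
Coder-pair coboundary maps satisfy `d_c^{n+1} ∘ d_c^n = 0` for all `n ≥ 1`.
The first conjunct is the case `n = 1` (where `C_Coder^1(M,C) = Hom(M,C)` and
`d_c^1(f) = (δ_c f, −ω f)`); the second conjunct covers all `n ≥ 2`, where an
element of `C_Coder^n(M,C) = C_c^n(M,C) × C_c^{n-1}(M,C)` is a pair `(f, g)` with
`f : M →ₗ Tpow k C (n'+1)` and `g : M →ₗ Tpow k C n'` for `n = n' + 2`:
`δ_c(δ_c(f)) = 0` and `δ_c(δ_c(g) + (−1)^n ω(f)) + (−1)^{n+1} ω(δ_c(f)) = 0`. -/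
theorem dC_squared_eq_zero [CharZero k]
    (C : ModuleCat.{0} k) (Δ : C →ₗ[k] C ⊗[k] C)
    (hΔ : (TensorProduct.assoc k C C C).toLinearMap ∘ₗ LinearMap.rTensor C Δ ∘ₗ Δ
        = LinearMap.lTensor C Δ ∘ₗ Δ)
    (ψC : C →ₗ[k] C)
    (hψC : Δ ∘ₗ ψC = LinearMap.rTensor C ψC ∘ₗ Δ + LinearMap.lTensor C ψC ∘ₗ Δ)
    (M : ModuleCat.{0} k)
    (ρl : M →ₗ[k] C ⊗[k] M) (ρr : M →ₗ[k] M ⊗[k] C) (ψM : M →ₗ[k] M)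
    (hl : (TensorProduct.assoc k C C M).toLinearMap ∘ₗ LinearMap.rTensor M Δ ∘ₗ ρl
        = LinearMap.lTensor C ρl ∘ₗ ρl)
    (hr : (TensorProduct.assoc k M C C).toLinearMap ∘ₗ LinearMap.rTensor C ρr ∘ₗ ρr
        = LinearMap.lTensor M Δ ∘ₗ ρr)
    (hlr : LinearMap.lTensor C ρr ∘ₗ ρl
        = (TensorProduct.assoc k C M C).toLinearMap ∘ₗ LinearMap.rTensor C ρl ∘ₗ ρr)
    (hψl : ρl ∘ₗ ψM = LinearMap.lTensor C ψM ∘ₗ ρl + LinearMap.rTensor M ψC ∘ₗ ρl)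
    (hψr : ρr ∘ₗ ψM = LinearMap.rTensor C ψM ∘ₗ ρr + LinearMap.lTensor M ψC ∘ₗ ρr) :
    (∀ f : M →ₗ[k] Tpow k C 0,
      deltaC C Δ M ρl ρr 1 (deltaC C Δ M ρl ρr 0 f) = 0 ∧
      deltaC C Δ M ρl ρr 0 (((-1 : ℤ) ^ 1) • omegaC C ψC M ψM 0 f)
        + ((-1 : ℤ) ^ 2) • omegaC C ψC M ψM 1 (deltaC C Δ M ρl ρr 0 f) = 0) ∧
    (∀ (n : ℕ) (f : M →ₗ[k] Tpow k C (n + 1)) (g : M →ₗ[k] Tpow k C n),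
      deltaC C Δ M ρl ρr (n + 2) (deltaC C Δ M ρl ρr (n + 1) f) = 0 ∧
      deltaC C Δ M ρl ρr (n + 1)
          (deltaC C Δ M ρl ρr n g + ((-1 : ℤ) ^ (n + 2)) • omegaC C ψC M ψM (n + 1) f)
        + ((-1 : ℤ) ^ (n + 3)) • omegaC C ψC M ψM (n + 2) (deltaC C Δ M ρl ρr (n + 1) f)
        = 0) :=
  dC_squared_eq_zero_general C Δ hΔ ψC hψC M ρl ρr ψM hl hr hlr hψl hψr
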